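/- arXiv:1810.08225 — 8 statements merged into one kernel-verified Lean document; each statement's English description precedes it below -/
import Mathlib

section
/- (Lemma 2.1) Let n ≥ 2, let d_1, …, d_n ∈ ℝ³ satisfy ∑_{i=1}^n d_i = 0, let ρ_1, …, ρ_n > 0 with ρ = ∑_{k=1}^n ρ_k, and let (B_{ij}) ∈ ℝ^{n×n} be symmetric with nonnegative entries. Define τ_{ij} = δ_{ij} ∑_{k=1}^n B_{ik} − B_{ij} and assume that the leading principal submatrix τ̃ = (τ_{ij})_{1 ≤ i,j ≤ n−1} is invertible. Then the system −∑_{j=1}^n B_{ij}(u_i − u_j) = d_i for i = 1, …, n, subject to the constraint ∑_{i=1}^n ρ_i u_i = 0, has exactly one solution (u_1, …, u_n) ∈ (ℝ³)ⁿ, and it is given by ρ_i u_i = −∑_{j,k=1}^{n−1} (δ_{ij} ρ_i − ρ_i ρ_j/ρ) (τ̃⁻¹)_{jk} d_k for i = 1, …, n−1, together with ρ_n u_n = −∑_{j=1}^{n−1} ρ_j u_j. -/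
open Finset

/-!
The matrix `τ` is the Laplacian of the weighted graph with weights `B`: its rows sum to zero, so
`∑ j, B i j • (u i - u j) = ∑ j, τ i j • (u j - u last)`, and only the differences
`w j = u j - u last`, `j ≠ last`, enter the system. By the symmetry of `B` the left-hand sides
of the `m + 1` equations sum to zero, as do the `d i`, so the last equation follows from the first
`m`. These say `τs w = -d`, that is `w = -τs⁻¹ d` (`friction_system_iff`). The constraint
`∑ i, ρ i • u i = 0` then fixes the remaining unknown `u last = (∑ ρ)⁻¹ • ∑ j, ρ j • τs⁻¹ d j`
(`last_eq_of_constraint`), and substituting this in `u j = u last + w j` gives the stated formula.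
-/

section Helpers

variable {E : Type*} [AddCommGroup E] [Module ℝ E]

/-- Inversion of an invertible linear system whose unknowns are vectors of a module. -/
lemma matrix_smul_system_iff {m : ℕ} (M : Matrix (Fin m) (Fin m) ℝ) (hM : IsUnit M.det)
    (w e : Fin m → E) :
    (∀ i, ∑ j, M i j • w j = e i) ↔ ∀ j, w j = ∑ k, M⁻¹ j k • e k := by
  have key : ∀ (P Q : Matrix (Fin m) (Fin m) ℝ), P * Q = 1 → ∀ (x : Fin m → E) (i : Fin m),
      ∑ j, P i j • ∑ k, Q j k • x k = x i := by
    intro P Q hPQ x i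
    simp_rw [Finset.smul_sum, smul_smul]
    rw [Finset.sum_comm]
    simp_rw [← Finset.sum_smul, ← Matrix.mul_apply, hPQ, Matrix.one_apply, ite_smul, one_smul,
      zero_smul]
    simp
  constructor
  · intro h j
    rw [← key _ _ (Matrix.nonsing_inv_mul M hM) w j]
    simp_rw [h]
  · intro h i
    simp_rw [h]
    exact key _ _ (Matrix.mul_nonsing_inv M hM) e i

/-- The friction term depends only on the differences `u j - u last`, because the rows of `τ` sum
to zero. -/
lemma friction_eq_laplacian {m : ℕ} (B τ : Matrix (Fin (m + 1)) (Fin (m + 1)) ℝ)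
    (hτ : ∀ i j, τ i j = (if i = j then ∑ k, B i k else 0) - B i j)
    (u : Fin (m + 1) → E) (i : Fin (m + 1)) :
    ∑ j, B i j • (u i - u j)
      = ∑ j : Fin m, τ i j.castSucc • (u j.castSucc - u (Fin.last m)) := by
  have h : ∑ j : Fin m, τ i j.castSucc • (u j.castSucc - u (Fin.last m))
      = ∑ j, τ i j • (u j - u (Fin.last m)) := by
    rw [Fin.sum_univ_castSucc]; simp
  rw [h]
  simp_rw [hτ, sub_smul, Finset.sum_sub_distrib, ite_smul, zero_smul]
  rw [Finset.sum_ite_eq Finset.univ i, if_pos (Finset.mem_univ i), Finset.sum_smul,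
    ← Finset.sum_sub_distrib]
  refine Finset.sum_congr rfl fun j _ => ?_
  rw [← smul_sub]
  congr 1
  abel

lemma friction_total_eq_zero {n : ℕ} (B : Matrix (Fin n) (Fin n) ℝ) (hsym : B.IsSymm)
    (u : Fin n → E) : ∑ i, ∑ j, B i j • (u i - u j) = 0 := by
  simp_rw [smul_sub, Finset.sum_sub_distrib]
  rw [sub_eq_zero, Finset.sum_comm]
  exact Finset.sum_congr rfl fun i _ => Finset.sum_congr rfl fun j _ => by rw [hsym.apply]

/-- The full system, without the constraint, determines exactly the differences
`u j - u last`. -/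
lemma friction_system_iff {m : ℕ} (d : Fin (m + 1) → E) (hd : ∑ i, d i = 0)
    (B : Matrix (Fin (m + 1)) (Fin (m + 1)) ℝ) (hsym : B.IsSymm)
    (τ : Matrix (Fin (m + 1)) (Fin (m + 1)) ℝ)
    (hτ : ∀ i j, τ i j = (if i = j then ∑ k, B i k else 0) - B i j)
    (τs : Matrix (Fin m) (Fin m) ℝ)
    (hτs : ∀ i j : Fin m, τs i j = τ i.castSucc j.castSucc)
    (hinv : IsUnit τs.det) (u : Fin (m + 1) → E) :
    (∀ i, -∑ j, B i j • (u i - u j) = d i) ↔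
      ∀ j : Fin m, u j.castSucc = u (Fin.last m) - ∑ k : Fin m, τs⁻¹ j k • d k.castSucc := by
  have h1 : (∀ i, -∑ j, B i j • (u i - u j) = d i) ↔
      ∀ i : Fin m, -∑ j, B i.castSucc j • (u i.castSucc - u j) = d i.castSucc := by
    refine ⟨fun h i => h _, fun h i => ?_⟩
    induction i using Fin.lastCases with
    | cast i => exact h i
    | last =>
      -- both sides sum to zero over all indices, so agreement on the first `m` suffices
      have ht := friction_total_eq_zero B hsym u
      rw [Fin.sum_univ_castSucc] at ht hd
      rw [neg_eq_of_add_eq_zero_left ht, eq_neg_of_add_eq_zero_right hd,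
        ← Finset.sum_neg_distrib]
      refine Finset.sum_congr rfl fun i _ => ?_
      rw [← h i, neg_neg]
  rw [h1]
  have h2 := matrix_smul_system_iff τs hinv
    (fun j => u j.castSucc - u (Fin.last m)) (fun k => -d k.castSucc)
  simp only [smul_neg, Finset.sum_neg_distrib] at h2
  simp_rw [friction_eq_laplacian B τ hτ u, ← hτs, neg_eq_iff_eq_neg]
  rw [h2]
  refine forall_congr' fun j => ?_
  rw [sub_eq_iff_eq_add, neg_add_eq_sub]

/-- Once the differences `u last - u j = v j` are prescribed, the constraint determines
`u last`. -/
lemma last_eq_of_constraint {m : ℕ} (ρ : Fin (m + 1) → ℝ) (hρ : ∑ l, ρ l ≠ 0)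
    (v : Fin m → E) (u : Fin (m + 1) → E)
    (hu : ∀ j : Fin m, u j.castSucc = u (Fin.last m) - v j) :
    ∑ i, ρ i • u i = 0 ↔
      u (Fin.last m) = (∑ l, ρ l)⁻¹ • ∑ j : Fin m, ρ j.castSucc • v j := by
  have h : ∑ i, ρ i • u i
      = (∑ l, ρ l) • u (Fin.last m) - ∑ j : Fin m, ρ j.castSucc • v j := by
    simp_rw [Fin.sum_univ_castSucc, hu, smul_sub, Finset.sum_sub_distrib, add_smul,
      Finset.sum_smul]
    abel
  rw [h, sub_eq_zero, eq_inv_smul_iff₀ hρ]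

end Helpers

/-- **Lemma 2.1.** Let `n = m + 1 ≥ 2`, let `d₁, …, dₙ ∈ ℝ³` sum to zero, let
`ρᵢ > 0`, and let `B` be symmetric with nonnegative entries.  With
`τ i j = δᵢⱼ ∑ₖ B i k - B i j` and the leading principal `(n-1)×(n-1)` submatrix `τs`
assumed invertible, the system `-∑ⱼ B i j (uᵢ - uⱼ) = dᵢ` subject to `∑ᵢ ρᵢ uᵢ = 0`
has exactly one solution, given by
`ρᵢ uᵢ = -∑ⱼₖ (δᵢⱼ ρᵢ - ρᵢρⱼ/ρ) (τs⁻¹)ⱼₖ dₖ` for `i < n` and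
`ρₙ uₙ = -∑_{j<n} ρⱼ uⱼ`. -/
theorem linear_friction_system_unique_solution
    (m : ℕ) (hm : 1 ≤ m)
    (d : Fin (m + 1) → EuclideanSpace ℝ (Fin 3)) (hd : ∑ i, d i = 0)
    (ρ : Fin (m + 1) → ℝ) (hρ : ∀ i, 0 < ρ i)
    (B : Matrix (Fin (m + 1)) (Fin (m + 1)) ℝ) (hsym : B.IsSymm)
    (hnn : ∀ i j, 0 ≤ B i j)
    (τ : Matrix (Fin (m + 1)) (Fin (m + 1)) ℝ)
    (hτ : ∀ i j, τ i j = (if i = j then ∑ k, B i k else 0) - B i j)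
    (τs : Matrix (Fin m) (Fin m) ℝ)
    (hτs : ∀ i j : Fin m, τs i j = τ i.castSucc j.castSucc)
    (hinv : IsUnit τs.det) :
    (∃! u : Fin (m + 1) → EuclideanSpace ℝ (Fin 3),
        (∀ i, -∑ j, B i j • (u i - u j) = d i) ∧ ∑ i, ρ i • u i = 0) ∧
    ∀ u : Fin (m + 1) → EuclideanSpace ℝ (Fin 3),
      ((∀ i, -∑ j, B i j • (u i - u j) = d i) ∧ ∑ i, ρ i • u i = 0) →
      (∀ i : Fin m,
          ρ i.castSucc • u i.castSucc
            = -∑ j : Fin m, ∑ k : Fin m,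
                (((if i = j then ρ i.castSucc else 0)
                    - ρ i.castSucc * ρ j.castSucc / ∑ l, ρ l) * τs⁻¹ j k)
                  • d k.castSucc) ∧
        ρ (Fin.last m) • u (Fin.last m) = -∑ j : Fin m, ρ j.castSucc • u j.castSucc := by
  have hpos : ∑ l, ρ l ≠ 0 :=
    (Finset.sum_pos (fun i _ => hρ i) Finset.univ_nonempty).ne'
  have hsys := friction_system_iff d hd B hsym τ hτ τs hτs hinv
  set v : Fin m → EuclideanSpace ℝ (Fin 3) := fun j => ∑ k : Fin m, τs⁻¹ j k • d k.castSucc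
    with hv
  set c : EuclideanSpace ℝ (Fin 3) := (∑ l, ρ l)⁻¹ • ∑ j : Fin m, ρ j.castSucc • v j with hc
  have hchar : ∀ u : Fin (m + 1) → EuclideanSpace ℝ (Fin 3),
      ((∀ i, -∑ j, B i j • (u i - u j) = d i) ∧ ∑ i, ρ i • u i = 0) ↔
        (∀ j : Fin m, u j.castSucc = c - v j) ∧ u (Fin.last m) = c := by
    intro u
    rw [hsys u]
    constructor
    · rintro ⟨h, h0⟩
      have hl := (last_eq_of_constraint ρ hpos v u h).1 h0
      exact ⟨fun j => by rw [h j, hl], hl⟩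
    · rintro ⟨h, hl⟩
      have h' : ∀ j : Fin m, u j.castSucc = u (Fin.last m) - v j := fun j => by rw [h j, hl]
      exact ⟨h', (last_eq_of_constraint ρ hpos v u h').2 hl⟩
  refine ⟨⟨Fin.snoc (fun j => c - v j) c, (hchar _).2 ⟨fun j => ?_, ?_⟩, fun u hu => ?_⟩,
    fun u hu => ⟨fun i => ?_, ?_⟩⟩
  · simp
  · simp
  · obtain ⟨h, hl⟩ := (hchar u).1 hu
    ext1 i
    induction i using Fin.lastCases with
    | cast i => simpa using h i
    | last => simpa using hl
  · rw [((hchar u).1 hu).1 i]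
    simp_rw [mul_smul, ← Finset.smul_sum, sub_smul, Finset.sum_sub_distrib, ite_smul, zero_smul]
    rw [Finset.sum_ite_eq Finset.univ i, if_pos (Finset.mem_univ i), neg_sub, smul_sub, hc,
      smul_smul, Finset.smul_sum]
    congr 1
    refine Finset.sum_congr rfl fun j _ => ?_
    rw [smul_smul]
    congr 1
    ring
  · have h0 := hu.2
    rw [Fin.sum_univ_castSucc] at h0
    exact eq_neg_of_add_eq_zero_right h0
end

section
/- (Algebraic core of Lemma 2.2) Let n ≥ 2, ρ_1, …, ρ_n > 0 with ρ = ∑_{k=1}^n ρ_k, let (B_{ij}) ∈ ℝ^{n×n} be symmetric with nonnegative entries, define τ_{ij} = δ_{ij} ∑_{k=1}^n B_{ik} − B_{ij}, and assume the leading principal submatrix τ̃ = (τ_{ij})_{1 ≤ i,j ≤ n−1} is invertible. Let μ_1, …, μ_n ∈ ℝ³, ε > 0, and set d_i = ρ_i μ_i − (ρ_i/ρ) ∑_{j=1}^n ρ_j μ_j for i = 1, …, n. If (u_1, …, u_n) ∈ (ℝ³)ⁿ solves −∑_{j=1}^n B_{ij}(u_i − u_j) = ε d_i for all i together with ∑_{i=1}^n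 ρ_i u_i = 0, then for every i = 1, …, n−1, ρ_i u_i = −ε ∑_{ℓ=1}^{n−1} D̃_{iℓ} (μ_ℓ − μ_n), where D̃ = R τ̃⁻¹ R and R_{ij} = δ_{ij} ρ_i − ρ_i ρ_j/ρ for i, j = 1, …, n−1. -/
open Finset

/-!
Work one coordinate at a time, and write `n` for the last index. Both the force `d` and the
momenta `ρᵢ uᵢ` come from the same map `x ↦ ρᵢ xᵢ - (ρᵢ/ρ) ∑ⱼ ρⱼ xⱼ`. It kills constant vectors,
so it depends only on the differences `xₗ - xₙ`, on which it acts as the matrix `R`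
(`projection_eq_mulVec`). Taking `x = μ` gives `d = R (μ - μₙ)`; taking `x = u`, where
`∑ⱼ ρⱼ uⱼ = 0`, gives `ρ u = R (u - uₙ)`. The rows of `τ` sum to zero, so the linear system reads
`τs (u - uₙ) = -ε d` in its first `n - 1` rows (`friction_eq_mulVec`). Inverting `τs` yields
`ρ u = -ε R τs⁻¹ R (μ - μₙ)`.
-/

open Matrix in
/-- The scalar map `x ↦ ρᵢ xᵢ - (ρᵢ/ρ) ∑ⱼ ρⱼ xⱼ` vanishes on constants, hence is given by `R`
acting on the differences with the last component. -/
lemma projection_eq_mulVec {m : ℕ} (ρ : Fin (m + 1) → ℝ) (hρ : ∑ k, ρ k ≠ 0)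
    (R : Matrix (Fin m) (Fin m) ℝ)
    (hR : ∀ i j, R i j = (if i = j then ρ i.castSucc else 0)
        - ρ i.castSucc * ρ j.castSucc / ∑ k, ρ k)
    (x : Fin (m + 1) → ℝ) (i : Fin m) :
    (R *ᵥ fun l => x l.castSucc - x (Fin.last m)) i
      = ρ i.castSucc * x i.castSucc - ρ i.castSucc / (∑ k, ρ k) * ∑ j, ρ j * x j := by
  -- The last term of the centred sum is zero, so the sum over `Fin m` extends to `Fin (m + 1)`.
  have key : ∑ l : Fin m, ρ l.castSucc * (x l.castSucc - x (Fin.last m))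
      = ∑ j, ρ j * x j - (∑ k, ρ k) * x (Fin.last m) := by
    rw [Finset.sum_mul, ← Finset.sum_sub_distrib, Fin.sum_univ_castSucc]
    simp [mul_sub]
  have h1 : (R *ᵥ fun l => x l.castSucc - x (Fin.last m)) i
      = ρ i.castSucc * (x i.castSucc - x (Fin.last m))
        - ρ i.castSucc / (∑ k, ρ k)
          * ∑ l : Fin m, ρ l.castSucc * (x l.castSucc - x (Fin.last m)) := by
    simp only [mulVec, dotProduct, hR, sub_mul, ite_mul, zero_mul, Finset.sum_sub_distrib,
      Finset.sum_ite_eq, Finset.mem_univ, if_true, Finset.mul_sum]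
    congr 1
    exact Finset.sum_congr rfl fun l _ => by ring
  rw [h1, key]
  field_simp
  ring

open Matrix in
/-- Since the rows of `τ` sum to zero, the friction term is the reduced matrix `τs` acting on the
differences with the last component. -/
lemma friction_eq_mulVec {m : ℕ} (B τ : Matrix (Fin (m + 1)) (Fin (m + 1)) ℝ)
    (hτ : ∀ i j, τ i j = (if i = j then ∑ k, B i k else 0) - B i j)
    (τs : Matrix (Fin m) (Fin m) ℝ)
    (hτs : ∀ i j : Fin m, τs i j = τ i.castSucc j.castSucc)
    (x : Fin (m + 1) → ℝ) (i : Fin m) :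
    (τs *ᵥ fun l => x l.castSucc - x (Fin.last m)) i
      = ∑ j, B i.castSucc j * (x i.castSucc - x j) := by
  have h1 : (τs *ᵥ fun l => x l.castSucc - x (Fin.last m)) i
      = ∑ j, τ i.castSucc j * (x j - x (Fin.last m)) := by
    rw [Fin.sum_univ_castSucc]
    simp [mulVec, dotProduct, hτs]
  rw [h1]
  simp only [hτ, sub_mul, ite_mul, zero_mul, Finset.sum_sub_distrib, Finset.sum_ite_eq,
    Finset.mem_univ, if_true, Finset.sum_mul]
  rw [← Finset.sum_sub_distrib]
  exact Finset.sum_congr rfl fun j _ => by ring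

/-- **algebraic core of Lemma 2.2.** With `n = m + 1 ≥ 2`, positive densities
`ρᵢ`, a symmetric nonnegative matrix `B`, `τ i j = δᵢⱼ ∑ₖ B i k - B i j` whose leading
principal submatrix `τs` is invertible, chemical potentials `μᵢ ∈ ℝ³`, `ε > 0`, and
`dᵢ = ρᵢ μᵢ - (ρᵢ/ρ)∑ⱼ ρⱼ μⱼ`: if `u` solves `-∑ⱼ B i j (uᵢ - uⱼ) = ε dᵢ` with
`∑ᵢ ρᵢ uᵢ = 0`, then `ρᵢ uᵢ = -ε ∑ₗ D̃ i ℓ (μₗ - μₙ)` for `i < n`, where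
`D̃ = R τs⁻¹ R` and `R i j = δᵢⱼ ρᵢ - ρᵢρⱼ/ρ`. -/
theorem chapman_enskog_mobility_formula
    (m : ℕ) (hm : 1 ≤ m) (ρ : Fin (m + 1) → ℝ) (hρ : ∀ i, 0 < ρ i)
    (B : Matrix (Fin (m + 1)) (Fin (m + 1)) ℝ) (hsym : B.IsSymm)
    (hnn : ∀ i j, 0 ≤ B i j)
    (τ : Matrix (Fin (m + 1)) (Fin (m + 1)) ℝ)
    (hτ : ∀ i j, τ i j = (if i = j then ∑ k, B i k else 0) - B i j)
    (τs : Matrix (Fin m) (Fin m) ℝ)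
    (hτs : ∀ i j : Fin m, τs i j = τ i.castSucc j.castSucc)
    (hinv : IsUnit τs.det)
    (μ : Fin (m + 1) → EuclideanSpace ℝ (Fin 3)) (ε : ℝ) (hε : 0 < ε)
    (d : Fin (m + 1) → EuclideanSpace ℝ (Fin 3))
    (hd : ∀ i, d i = ρ i • μ i - (ρ i / ∑ k, ρ k) • ∑ j, ρ j • μ j)
    (R : Matrix (Fin m) (Fin m) ℝ)
    (hR : ∀ i j, R i j = (if i = j then ρ i.castSucc else 0)
        - ρ i.castSucc * ρ j.castSucc / ∑ k, ρ k)
    (u : Fin (m + 1) → EuclideanSpace ℝ (Fin 3))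
    (hu1 : ∀ i, -∑ j, B i j • (u i - u j) = ε • d i)
    (hu2 : ∑ i, ρ i • u i = 0) :
    ∀ i : Fin m,
      ρ i.castSucc • u i.castSucc
        = -(ε • ∑ l : Fin m,
            (R * τs⁻¹ * R) i l • (μ l.castSucc - μ (Fin.last m))) := by
  intro i
  have hρ0 : ∑ k, ρ k ≠ 0 := (Finset.sum_pos (fun k _ => hρ k) Finset.univ_nonempty).ne'
  ext c
  set v : Fin m → ℝ := fun l => u l.castSucc c - u (Fin.last m) c with hv
  set w : Fin m → ℝ := fun l => μ l.castSucc c - μ (Fin.last m) c with hw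
  have hu2c : ∑ j, ρ j * u j c = 0 := by
    simpa using congrArg (fun y : EuclideanSpace ℝ (Fin 3) => y c) hu2
  have hRv : R.mulVec v i = ρ i.castSucc * u i.castSucc c := by
    rw [hv, projection_eq_mulVec ρ hρ0 R hR (fun k => u k c) i, hu2c, mul_zero, sub_zero]
  have hτv : τs.mulVec v = -(ε • R.mulVec w) := by
    ext l
    have h := congrArg (fun y : EuclideanSpace ℝ (Fin 3) => y c) (hu1 l.castSucc)
    simp only [hd, PiLp.neg_apply, PiLp.smul_apply, PiLp.sub_apply, WithLp.ofLp_sum,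
      Finset.sum_apply, smul_eq_mul] at h
    rw [Pi.neg_apply, Pi.smul_apply, hv, hw, friction_eq_mulVec B τ hτ τs hτs (fun k => u k c) l,
      projection_eq_mulVec ρ hρ0 R hR (fun k => μ k c) l, smul_eq_mul]
    linarith
  have hv' : v = -(ε • τs⁻¹.mulVec (R.mulVec w)) := by
    rw [← Matrix.mulVec_smul, ← Matrix.mulVec_neg, ← hτv, Matrix.mulVec_mulVec,
      Matrix.nonsing_inv_mul _ hinv, Matrix.one_mulVec]
  have hfin : ρ i.castSucc * u i.castSucc c = -(ε * (R * τs⁻¹ * R).mulVec w i) := by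
    rw [← hRv, hv', Matrix.mulVec_neg, Matrix.mulVec_smul, Matrix.mulVec_mulVec,
      Matrix.mulVec_mulVec]
    rfl
  simpa [Matrix.mulVec, dotProduct, hw] using hfin
end

section
/- Let n ≥ 2, ρ_1, …, ρ_n > 0 with ρ = ∑_{k=1}^n ρ_k, let (B_{ij}) ∈ ℝ^{n×n} be symmetric with nonnegative entries, define τ_{ij} = δ_{ij} ∑_{k=1}^n B_{ik} − B_{ij}, and assume that the leading principal submatrix τ̃ = (τ_{ij})_{1 ≤ i,j ≤ n−1} is invertible. Then τ̃ is symmetric positive definite, and the matrix D̃ = R τ̃⁻¹ R, where R_{ij} = δ_{ij} ρ_i − ρ_i ρ_j/ρ for i, j = 1, …, n−1, is symmetric positive definite. -/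
/-!
The matrix `τ` is the weighted graph Laplacian of `B`, whose quadratic form is
`xᵀ τ x = ½ ∑ᵢⱼ Bᵢⱼ (xᵢ - xⱼ)² ≥ 0`. Hence `τ` and its principal submatrix `τs` are positive
semidefinite, and a positive semidefinite invertible matrix is positive definite; so is `τs⁻¹`.

The matrix `R` is symmetric, and it has trivial kernel: `R z = 0` forces every `zᵢ` to equal the
weighted mean `s = (∑ⱼ ρⱼ zⱼ) / ρ`, where the sum omits the last index while `ρ` includes it, so
`s ρ = s (ρ - ρₙ)` and `s = 0`. Thus `R τs⁻¹ R = Rᴴ τs⁻¹ R` is a congruence of a positive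
definite matrix by an injective one.
-/

open Finset

/-- Twice the quadratic form of the weighted graph Laplacian is `∑ᵢⱼ Bᵢⱼ (xᵢ - xⱼ)²`. -/
theorem laplacian_posSemidef {ι : Type*} [Fintype ι] [DecidableEq ι]
    (B : Matrix ι ι ℝ) (hsym : B.IsSymm) (hnn : ∀ i j, 0 ≤ B i j) (τ : Matrix ι ι ℝ)
    (hτ : ∀ i j, τ i j = (if i = j then ∑ k, B i k else 0) - B i j) :
    τ.PosSemidef := by
  have hB : ∀ i j, B j i = B i j := fun i j => hsym.apply i j
  refine Matrix.PosSemidef.of_dotProduct_mulVec_nonneg ?_ fun x => ?_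
  · ext i j
    rw [Matrix.conjTranspose_apply, star_trivial, hτ, hτ, hB i j]
    by_cases h : i = j
    · subst h; rfl
    · simp [h, Ne.symm h]
  · have e1 : star x ⬝ᵥ Matrix.mulVec τ x
        = ∑ i, ∑ j, B i j * x i ^ 2 - ∑ i, ∑ j, B i j * (x i * x j) := by
      simp only [dotProduct, Matrix.mulVec, hτ, star_trivial, sub_mul, ite_mul, zero_mul,
        Finset.sum_sub_distrib, Finset.sum_ite_eq, Finset.mem_univ, if_true, mul_sub,
        Finset.mul_sum, Finset.sum_mul]
      congr 1 <;> refine Finset.sum_congr rfl fun i _ => Finset.sum_congr rfl fun j _ => by ring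
    have e2 : ∑ i, ∑ j, B i j * x j ^ 2 = ∑ i, ∑ j, B i j * x i ^ 2 := by
      rw [Finset.sum_comm]
      exact Finset.sum_congr rfl fun i _ => Finset.sum_congr rfl fun j _ => by rw [hB]
    have e3 : ∑ i, ∑ j, B i j * (x i - x j) ^ 2
        = ∑ i, ∑ j, B i j * x i ^ 2 + ∑ i, ∑ j, B i j * x j ^ 2
          - 2 * ∑ i, ∑ j, B i j * (x i * x j) := by
      simp only [Finset.mul_sum, ← Finset.sum_add_distrib, ← Finset.sum_sub_distrib]
      exact Finset.sum_congr rfl fun i _ => Finset.sum_congr rfl fun j _ => by ring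
    have e4 : 0 ≤ ∑ i, ∑ j, B i j * (x i - x j) ^ 2 :=
      Finset.sum_nonneg fun i _ => Finset.sum_nonneg fun j _ =>
        mul_nonneg (hnn i j) (sq_nonneg _)
    linarith

/-- A kernel vector of `R` is constant, with value its own `ρ`-weighted sum over the first `m`
indices divided by the total density; positivity of the last density makes it zero. -/
theorem reduction_mulVec_injective (m : ℕ) (ρ : Fin (m + 1) → ℝ) (hρ : ∀ i, 0 < ρ i)
    (R : Matrix (Fin m) (Fin m) ℝ)
    (hR : ∀ i j, R i j = (if i = j then ρ i.castSucc else 0)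
        - ρ i.castSucc * ρ j.castSucc / ∑ k, ρ k) :
    Function.Injective R.mulVec := by
  rw [← Matrix.coe_mulVecLin, ← LinearMap.ker_eq_bot, LinearMap.ker_eq_bot']
  intro z hz
  have hS : 0 < ∑ k, ρ k := Finset.sum_pos (fun i _ => hρ i) Finset.univ_nonempty
  set s : ℝ := (∑ j : Fin m, ρ j.castSucc * z j) / ∑ k, ρ k with hs
  have hzi : ∀ i, z i = s := by
    intro i
    have h : R.mulVec z i = ρ i.castSucc * (z i - s) := by
      simp only [Matrix.mulVec, dotProduct, hR, sub_mul, ite_mul, zero_mul,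
        Finset.sum_sub_distrib, Finset.sum_ite_eq, Finset.mem_univ, if_true, hs, mul_sub,
        Finset.sum_div, Finset.mul_sum]
      congr 1
      exact Finset.sum_congr rfl fun j _ => by ring
    have h0 : R.mulVec z i = 0 := congrFun hz i
    rw [h, mul_eq_zero] at h0
    exact sub_eq_zero.mp (h0.resolve_left (hρ _).ne')
  have h1 : s * ∑ k, ρ k = (∑ j : Fin m, ρ j.castSucc) * s := by
    rw [hs, div_mul_cancel₀ _ hS.ne', ← hs, Finset.sum_mul]
    exact Finset.sum_congr rfl fun j _ => by rw [hzi j]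
  rw [Fin.sum_univ_castSucc] at h1
  have h2 : s * ρ (Fin.last m) = 0 := by linarith
  have h3 : s = 0 := (mul_eq_zero.mp h2).resolve_right (hρ _).ne'
  ext i
  rw [hzi i, h3, Pi.zero_apply]

/-- With `n = m + 1 ≥ 2`, positive densities `ρᵢ`, a symmetric nonnegative
matrix `B`, and `τ i j = δᵢⱼ ∑ₖ B i k - B i j` whose leading principal submatrix `τs` is
invertible: `τs` is symmetric positive definite and the mobility matrix `D̃ = R τs⁻¹ R`,
with `R i j = δᵢⱼ ρᵢ - ρᵢρⱼ/ρ`, is symmetric positive definite. -/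
theorem mobility_matrix_posDef
    (m : ℕ) (hm : 1 ≤ m) (ρ : Fin (m + 1) → ℝ) (hρ : ∀ i, 0 < ρ i)
    (B : Matrix (Fin (m + 1)) (Fin (m + 1)) ℝ) (hsym : B.IsSymm)
    (hnn : ∀ i j, 0 ≤ B i j)
    (τ : Matrix (Fin (m + 1)) (Fin (m + 1)) ℝ)
    (hτ : ∀ i j, τ i j = (if i = j then ∑ k, B i k else 0) - B i j)
    (τs : Matrix (Fin m) (Fin m) ℝ)
    (hτs : ∀ i j : Fin m, τs i j = τ i.castSucc j.castSucc)
    (hinv : IsUnit τs.det)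
    (R : Matrix (Fin m) (Fin m) ℝ)
    (hR : ∀ i j, R i j = (if i = j then ρ i.castSucc else 0)
        - ρ i.castSucc * ρ j.castSucc / ∑ k, ρ k) :
    τs.PosDef ∧ (R * τs⁻¹ * R).PosDef := by
  have hpsd : τs.PosSemidef := by
    have h : τs = τ.submatrix Fin.castSucc Fin.castSucc := by
      ext i j
      exact hτs i j
    rw [h]
    exact (laplacian_posSemidef B hsym hnn τ hτ).submatrix _
  have hpd : τs.PosDef := hpsd.posDef_iff_isUnit.mpr ((Matrix.isUnit_iff_isUnit_det _).mpr hinv)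
  have hRH : R.conjTranspose = R := by
    ext i j
    rw [Matrix.conjTranspose_apply, star_trivial, hR, hR, mul_comm (ρ j.castSucc)]
    by_cases h : i = j
    · subst h; rfl
    · simp [h, Ne.symm h]
  refine ⟨hpd, ?_⟩
  have key := hpd.inv.conjTranspose_mul_mul_same (reduction_mulVec_injective m ρ hρ R hR)
  rwa [hRH] at key
end

section
/- (Friction coercivity, inequality (h7)) Let n ≥ 2 and let (b_{ij}) ∈ ℝ^{n×n} be symmetric with nonnegative entries such that for every choice of ρ_1, …, ρ_n > 0, the only solutions of the homogeneous system ∑_{j=1}^n b_{ij} ρ_i ρ_j (u_i − u_j) = 0 for all i are u_1 = ⋯ = u_n (hypothesis (N)). Let 0 < κ ≤ K. Then there exists ν > 0 such that for all ρ_1, …, ρ_n ∈ [κ, K] and all v_1, …, v_n ∈ ℝ³, setting ρ = ∑_{i=1}^n ρ_i and v = (1/ρ) ∑_{i=1}^n ρ_i v_i, one has (1/2) ∑_{i,j=1}^n b_{ij} ρ_i ρ_j |v_i − v_j|² ≥ ν ∑_{i=1}^n ρ_i² |v_i − v|². -/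
open Finset

/-!
Write `Q v = ∑ i, ∑ j, b i j * ‖v i - v j‖ ^ 2`. Call two species linked if
`‖v i - v j‖ ^ 2 ≤ C * Q v` for some constant `C` independent of `v`. By the triangle inequality,
two species `j`, `k` with `b j k ≠ 0` are linked to the same species, so a vector field that is one
fixed unit vector on the species linked to `i` and zero elsewhere solves the friction system with
unit densities. Hypothesis (N) makes it constant, hence all species are linked
(`exists_norm_sub_sq_le`).

The barycentric velocity is a convex combination of the `v j`, so it lies in every closed ball
around `v i` containing them all; this bounds `‖v i - v‖ ^ 2` by a multiple of `Q v`. The densities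
only enter through `κ ^ 2 ≤ ρ i * ρ j` and `ρ i ^ 2 ≤ K ^ 2`.
-/

/-- Under hypothesis (N) for unit densities, the quadratic form of `b` controls every difference of
velocities, that is, the graph with edges `b i j ≠ 0` is connected. -/
theorem exists_norm_sub_sq_le {n : ℕ} (b : Matrix (Fin n) (Fin n) ℝ) (hsym : b.IsSymm)
    (hnn : ∀ i j, 0 ≤ b i j)
    (hN : ∀ u : Fin n → EuclideanSpace ℝ (Fin 3),
      (∀ i, ∑ j, b i j • (u i - u j) = 0) → ∀ i j, u i = u j) (i j : Fin n) :
    ∃ C : ℝ, 0 ≤ C ∧ ∀ v : Fin n → EuclideanSpace ℝ (Fin 3),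
      ‖v i - v j‖ ^ 2 ≤ C * ∑ k, ∑ l, b k l * ‖v k - v l‖ ^ 2 := by
  classical
  let R : Fin n → Prop := fun j => ∃ C : ℝ, 0 ≤ C ∧ ∀ v : Fin n → EuclideanSpace ℝ (Fin 3),
      ‖v i - v j‖ ^ 2 ≤ C * ∑ k, ∑ l, b k l * ‖v k - v l‖ ^ 2
  have step : ∀ j k, b j k ≠ 0 → R j → R k := by
    rintro j k hb ⟨C, hC, h⟩
    have hpos : 0 < b j k := lt_of_le_of_ne (hnn j k) hb.symm
    refine ⟨2 * C + 2 * (b j k)⁻¹, by positivity, fun v => ?_⟩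
    have hterm : ∀ k l, 0 ≤ b k l * ‖v k - v l‖ ^ 2 := fun k l => by
      have := hnn k l
      positivity
    have h1 : b j k * ‖v j - v k‖ ^ 2 ≤ ∑ k, ∑ l, b k l * ‖v k - v l‖ ^ 2 :=
      (single_le_sum (f := fun l => b j l * ‖v j - v l‖ ^ 2)
        (fun l _ => hterm j l) (mem_univ k)).trans
      (single_le_sum (f := fun k => ∑ l, b k l * ‖v k - v l‖ ^ 2)
        (fun k _ => sum_nonneg fun l _ => hterm k l) (mem_univ j))
    have h2 := h v
    set Q := ∑ k, ∑ l, b k l * ‖v k - v l‖ ^ 2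
    have h3 : ‖v j - v k‖ ^ 2 ≤ (b j k)⁻¹ * Q := by
      rwa [← div_eq_inv_mul, le_div_iff₀' hpos]
    have h4 : ‖v i - v k‖ ≤ ‖v i - v j‖ + ‖v j - v k‖ := norm_sub_le_norm_sub_add_norm_sub _ _ _
    have h5 : ‖v i - v k‖ ^ 2 ≤ (‖v i - v j‖ + ‖v j - v k‖) ^ 2 := by gcongr
    nlinarith [sq_nonneg (‖v i - v j‖ - ‖v j - v k‖)]
  have hi : R i := ⟨0, le_rfl, fun v => by simp⟩
  let e : EuclideanSpace ℝ (Fin 3) := EuclideanSpace.single 0 1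
  have he : e ≠ 0 := by simp [e]
  have hconst := hN (fun k => if R k then e else 0) (fun k => sum_eq_zero fun l _ => by
    by_cases hb : b k l = 0
    · simp [hb]
    · have hkl : R k ↔ R l :=
        ⟨step k l hb, step l k (by rwa [hsym.apply])⟩
      simp [hkl]) i j
  by_contra hj
  have hj' : ¬ R j := hj
  simp only [if_pos hi, if_neg hj'] at hconst
  exact he hconst

/-- **friction coercivity, inequality (h7).** Let `n ≥ 2` and let `b` be
symmetric with nonnegative entries satisfying hypothesis (N): for every choice of positive
densities, the homogeneous friction system only has constant solutions.  Then for
`0 < κ ≤ K` there is `ν > 0` such that for all densities `ρᵢ ∈ [κ, K]` and velocities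
`vᵢ ∈ ℝ³`, with barycentric velocity `v = ρ⁻¹ ∑ᵢ ρᵢ vᵢ`,
`(1/2)∑ᵢⱼ bᵢⱼ ρᵢ ρⱼ |vᵢ - vⱼ|² ≥ ν ∑ᵢ ρᵢ² |vᵢ - v|²`. -/
theorem friction_coercivity
    (n : ℕ) (hn : 2 ≤ n)
    (b : Matrix (Fin n) (Fin n) ℝ) (hsym : b.IsSymm) (hnn : ∀ i j, 0 ≤ b i j)
    (hN : ∀ ρ : Fin n → ℝ, (∀ i, 0 < ρ i) →
      ∀ u : Fin n → EuclideanSpace ℝ (Fin 3),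
        (∀ i, ∑ j, (b i j * ρ i * ρ j) • (u i - u j) = 0) → ∀ i j, u i = u j)
    (κ K : ℝ) (hκ : 0 < κ) (hκK : κ ≤ K) :
    ∃ ν > (0 : ℝ), ∀ ρ : Fin n → ℝ, (∀ i, ρ i ∈ Set.Icc κ K) →
      ∀ v : Fin n → EuclideanSpace ℝ (Fin 3),
        ν * ∑ i, ρ i ^ 2 * ‖v i - (∑ j, ρ j)⁻¹ • ∑ j, ρ j • v j‖ ^ 2
          ≤ (1 / 2) * ∑ i, ∑ j, b i j * ρ i * ρ j * ‖v i - v j‖ ^ 2 := by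
  have hN1 := hN (fun _ => 1) (fun _ => one_pos)
  simp only [mul_one] at hN1
  choose C hC0 hC using exists_norm_sub_sq_le b hsym hnn hN1
  set M : ℝ := ∑ i, ∑ j, C i j with hM
  have hM0 : 0 ≤ M := sum_nonneg fun i _ => sum_nonneg fun j _ => hC0 i j
  have hCM : ∀ i j, C i j ≤ M := fun i j =>
    (single_le_sum (f := fun j => C i j) (fun j _ => hC0 i j) (mem_univ j)).trans
      (single_le_sum (f := fun i => ∑ j, C i j)
        (fun i _ => sum_nonneg fun j _ => hC0 i j) (mem_univ i))
  -- The `+ 1` keeps the denominator positive when `M = 0`.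
  refine ⟨κ ^ 2 / 2 / (n * K ^ 2 * M + 1), by positivity, fun ρ hρ v => ?_⟩
  have hρ0 : ∀ i, 0 < ρ i := fun i => hκ.trans_le (hρ i).1
  set Q := ∑ k, ∑ l, b k l * ‖v k - v l‖ ^ 2 with hQ
  have hQ0 : 0 ≤ Q := sum_nonneg fun k _ => sum_nonneg fun l _ =>
    mul_nonneg (hnn k l) (sq_nonneg _)
  have hbary : ∀ i, ‖v i - (∑ j, ρ j)⁻¹ • ∑ j, ρ j • v j‖ ^ 2 ≤ M * Q := by
    intro i
    have hmem : univ.centerMass ρ v ∈ Metric.closedBall (v i) (√(M * Q)) := by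
      refine (convex_closedBall _ _).centerMass_mem (fun j _ => (hρ0 j).le)
        (sum_pos (fun j _ => hρ0 j) ⟨i, mem_univ i⟩) fun j _ => ?_
      rw [Metric.mem_closedBall, dist_comm, dist_eq_norm]
      exact Real.le_sqrt_of_sq_le
        ((hC i j v).trans (mul_le_mul_of_nonneg_right (hCM i j) hQ0))
    rw [Metric.mem_closedBall, dist_comm, dist_eq_norm, centerMass] at hmem
    exact (Real.le_sqrt (norm_nonneg _) (by positivity)).1 hmem
  have hleft : ∑ i, ρ i ^ 2 * ‖v i - (∑ j, ρ j)⁻¹ • ∑ j, ρ j • v j‖ ^ 2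
      ≤ n * K ^ 2 * M * Q := by
    calc _ ≤ ∑ _i : Fin n, K ^ 2 * (M * Q) := by
          refine sum_le_sum fun i _ => ?_
          exact mul_le_mul (pow_le_pow_left₀ (hρ0 i).le (hρ i).2 2) (hbary i)
            (sq_nonneg _) (sq_nonneg _)
      _ = _ := by
          simp only [sum_const, card_univ, Fintype.card_fin, nsmul_eq_mul]
          ring
  have hright : κ ^ 2 * Q ≤ ∑ i, ∑ j, b i j * ρ i * ρ j * ‖v i - v j‖ ^ 2 := by
    simp only [hQ, mul_sum]
    refine sum_le_sum fun i _ => sum_le_sum fun j _ => ?_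
    have h1 : κ * κ ≤ ρ i * ρ j := mul_le_mul (hρ i).1 (hρ j).1 hκ.le (hρ0 i).le
    have h2 := mul_le_mul_of_nonneg_right h1 (mul_nonneg (hnn i j) (sq_nonneg ‖v i - v j‖))
    linarith
  calc _ ≤ κ ^ 2 / 2 / (n * K ^ 2 * M + 1) * ((n * K ^ 2 * M + 1) * Q) := by
        refine mul_le_mul_of_nonneg_left ?_ (by positivity)
        linarith
    _ = κ ^ 2 / 2 * Q := by
        have : (n * K ^ 2 * M + 1 : ℝ) ≠ 0 := by positivity
        field_simp
    _ ≤ _ := by linarith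
end

section
/- (Friction reorganization identity, Step 5 of the relative energy inequality) Let (b_{ij}) ∈ ℝ^{n×n} be symmetric, let ρ_1, …, ρ_n, ρ̂_1, …, ρ̂_n ∈ ℝ, and let v_1, …, v_n, v̂_1, …, v̂_n ∈ ℝ³. Then −∑_{i,j=1}^n b_{ij}[ρ_i ρ_j (v_i − v_j) − ρ̂_i ρ̂_j (v̂_i − v̂_j)]·v̂_i − ∑_{i,j=1}^n b_{ij} ρ_i ρ̂_j (v_i − v̂_i)·(v̂_i − v̂_j) = (1/2) ∑_{i,j=1}^n b_{ij} ρ_i ρ_j |(v_i − v_j) − (v̂_i − v̂_j)|² − (1/2) ∑_{i,j=1}^n b_{ij} ρ_i ρ_j |v_i − v_j|² + (1/2) ∑_{i,j=1}^n b_{ij} ρ̂_i ρ̂_j |v̂_i − v̂_j|² + ∑_{i,j=1}^n b_{ij} ρ_i (ρ_j − ρ̂_j)(v_i − v̂_i)·(v̂_i − v̂_j). -/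
/-!
The right-hand norm square expands so that everything becomes a double sum of inner products. The
terms `bᵢⱼ ρᵢ ρ̂ⱼ (vᵢ - v̂ᵢ)·(v̂ᵢ - v̂ⱼ)` cancel; what is left agrees only after averaging the
summand with its transpose `i ↔ j`, which turns `aᵢⱼ (xᵢ - xⱼ)·yᵢ` into
`½ aᵢⱼ (xᵢ - xⱼ)·(yᵢ - yⱼ)` for symmetric `a`. Hence the identity follows from
`sum_sum_eq_of_symmetrized_eq` and a pointwise polynomial identity in the inner products.
-/

open Finset
open scoped RealInnerProductSpace

theorem sum_sum_eq_of_symmetrized_eq {n : ℕ} (F G : Fin n → Fin n → ℝ)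
    (h : ∀ i j, F i j + F j i = G i j + G j i) :
    ∑ i, ∑ j, F i j = ∑ i, ∑ j, G i j := by
  have key : ∑ i, ∑ j, (F i j + F j i) = ∑ i, ∑ j, (G i j + G j i) :=
    sum_congr rfl fun i _ => sum_congr rfl fun j _ => h i j
  simp only [sum_add_distrib] at key
  rw [sum_comm (f := fun i j => F j i), sum_comm (f := fun i j => G j i)] at key
  linarith

/-- **friction reorganization identity, Step 5 of the relative energy
inequality.** For a symmetric matrix `b`, densities `ρᵢ, ρ̂ᵢ ∈ ℝ`, and velocities
`vᵢ, v̂ᵢ ∈ ℝ³`,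
`-∑ᵢⱼ bᵢⱼ[ρᵢρⱼ(vᵢ-vⱼ) - ρ̂ᵢρ̂ⱼ(v̂ᵢ-v̂ⱼ)]·v̂ᵢ - ∑ᵢⱼ bᵢⱼ ρᵢρ̂ⱼ (vᵢ-v̂ᵢ)·(v̂ᵢ-v̂ⱼ)
 = (1/2)∑ᵢⱼ bᵢⱼ ρᵢρⱼ |(vᵢ-vⱼ)-(v̂ᵢ-v̂ⱼ)|² - (1/2)∑ᵢⱼ bᵢⱼ ρᵢρⱼ |vᵢ-vⱼ|²
   + (1/2)∑ᵢⱼ bᵢⱼ ρ̂ᵢρ̂ⱼ |v̂ᵢ-v̂ⱼ|² + ∑ᵢⱼ bᵢⱼ ρᵢ(ρⱼ-ρ̂ⱼ)(vᵢ-v̂ᵢ)·(v̂ᵢ-v̂ⱼ)`. -/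
theorem friction_reorganization_identity
    (n : ℕ) (b : Matrix (Fin n) (Fin n) ℝ) (hsym : b.IsSymm)
    (ρ ρh : Fin n → ℝ) (v vh : Fin n → EuclideanSpace ℝ (Fin 3)) :
    -∑ i, ∑ j, b i j *
        ⟪(ρ i * ρ j) • (v i - v j) - (ρh i * ρh j) • (vh i - vh j), vh i⟫
      - ∑ i, ∑ j, b i j * ρ i * ρh j * ⟪v i - vh i, vh i - vh j⟫
    = (1 / 2) * ∑ i, ∑ j, b i j * ρ i * ρ j * ‖(v i - v j) - (vh i - vh j)‖ ^ 2
      - (1 / 2) * ∑ i, ∑ j, b i j * ρ i * ρ j * ‖v i - v j‖ ^ 2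
      + (1 / 2) * ∑ i, ∑ j, b i j * ρh i * ρh j * ‖vh i - vh j‖ ^ 2
      + ∑ i, ∑ j, b i j * ρ i * (ρ j - ρh j) * ⟪v i - vh i, vh i - vh j⟫ := by
  simp only [mul_sum, ← sum_neg_distrib, ← sum_sub_distrib, ← sum_add_distrib]
  apply sum_sum_eq_of_symmetrized_eq
  intro i j
  rw [hsym.apply i j]
  simp only [← real_inner_self_eq_norm_sq, inner_sub_left, inner_sub_right,
    real_inner_smul_left]
  -- orient the mixed inner products so that `ring` sees each of them as one atom
  rw [real_inner_comm (v i) (v j), real_inner_comm (vh i) (vh j),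
    real_inner_comm (v i) (vh i), real_inner_comm (v i) (vh j),
    real_inner_comm (v j) (vh i), real_inner_comm (v j) (vh j)]
  ring
end

section
/- (Lower bound for the relative potential energy under hypothesis (A4)) Let I ⊆ (0, ∞) be an interval, α > 0, and let h, κ : I → ℝ be twice continuously differentiable with h''(s) ≥ α, κ(s) > 0, and κ(s)κ''(s) − 2κ'(s)² ≥ 0 for all s ∈ I. Define F(ρ, q) = h(ρ) + (1/2)κ(ρ)|q|² for ρ ∈ I, q ∈ ℝ³. Then for all ρ, ρ̂ ∈ I and q, q̂ ∈ ℝ³, F(ρ, q) − F(ρ̂, q̂) − (h'(ρ̂) + (1/2)κ'(ρ̂)|q̂|²)(ρ − ρ̂) − κ(ρ̂) q̂·(q − q̂) ≥ (α/2)(ρ − ρ̂)² + (1/(2κ(ρ))) |κ(ρ)q − κ(ρ̂)q̂|². -/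
open scoped RealInnerProductSpace

/-!
Subtracting the right-hand side, the terms in `‖q‖²` and `⟪qh, q⟫` cancel and the claim splits
into two scalar inequalities, each saying that a convex function on `I` lies above its tangent
line at `ρh`:

* `s ↦ h s - (α / 2) * s ^ 2` is convex because `h'' ≥ α`;
* `s ↦ -(κ s)⁻¹` is convex because its second derivative is `(κ κ'' - 2 κ' ^ 2) / κ ^ 3`. Its
  tangent-line inequality, multiplied by `(κ ρh) ^ 2`, is exactly the nonnegativity of the
  remaining coefficient of `‖qh‖²`.
-/

/-- A function with nonnegative second derivative on an interval lies above its tangent lines.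
The interval may be degenerate or contain its endpoints. -/
lemma tangent_le_of_second_deriv_nonneg {I : Set ℝ} (hI : Convex ℝ I) {f f' f'' : ℝ → ℝ}
    (hf : ∀ s ∈ I, HasDerivAt f (f' s) s) (hf' : ∀ s ∈ I, HasDerivAt f' (f'' s) s)
    (hf'' : ∀ s ∈ I, 0 ≤ f'' s) {a b : ℝ} (ha : a ∈ I) (hb : b ∈ I) :
    f b + f' b * (a - b) ≤ f a := by
  have hconv : ConvexOn ℝ I f := convexOn_of_hasDerivWithinAt2_nonneg hI
    (fun s hs => (hf s hs).continuousAt.continuousWithinAt)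
    (fun s hs => (hf s (interior_subset hs)).hasDerivWithinAt)
    (fun s hs => (hf' s (interior_subset hs)).hasDerivWithinAt)
    (fun s hs => hf'' s (interior_subset hs))
  rcases lt_trichotomy a b with hab | rfl | hab
  · have h := hconv.slope_le_of_hasDerivAt ha hb hab (hf b hb)
    rw [slope_def_field, div_le_iff₀ (sub_pos.2 hab)] at h
    linarith
  · simp
  · have h := hconv.le_slope_of_hasDerivAt hb ha hab (hf b hb)
    rw [slope_def_field, le_div_iff₀ (sub_pos.2 hab)] at h
    linarith

/-- **lower bound for the relative potential energy under hypothesis (A4).**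
Let `I ⊆ (0,∞)` be an interval, `α > 0`, and `h, κ` twice continuously differentiable with
`h'' ≥ α`, `κ > 0`, and `κκ'' - 2(κ')² ≥ 0` on `I`.  With
`F(ρ,q) = h(ρ) + (1/2)κ(ρ)|q|²`, the relative energy satisfies
`F(ρ,q|ρ̂,q̂) ≥ (α/2)(ρ-ρ̂)² + (1/(2κ(ρ)))|κ(ρ)q - κ(ρ̂)q̂|²` for all `ρ, ρ̂ ∈ I` and
`q, q̂ ∈ ℝ³`. -/
theorem relative_potential_energy_lower_bound
    (I : Set ℝ) (hI : Convex ℝ I) (hI0 : I ⊆ Set.Ioi (0 : ℝ))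
    (α : ℝ) (hα : 0 < α) (h κ : ℝ → ℝ)
    (hh : ContDiff ℝ 2 h) (hκ : ContDiff ℝ 2 κ)
    (hh'' : ∀ s ∈ I, α ≤ deriv (deriv h) s)
    (hκpos : ∀ s ∈ I, 0 < κ s)
    (hκcond : ∀ s ∈ I, 0 ≤ κ s * deriv (deriv κ) s - 2 * (deriv κ s) ^ 2) :
    ∀ ρ ∈ I, ∀ ρh ∈ I, ∀ q qh : EuclideanSpace ℝ (Fin 3),
      (α / 2) * (ρ - ρh) ^ 2 + (1 / (2 * κ ρ)) * ‖κ ρ • q - κ ρh • qh‖ ^ 2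
        ≤ (h ρ + (1 / 2) * κ ρ * ‖q‖ ^ 2) - (h ρh + (1 / 2) * κ ρh * ‖qh‖ ^ 2)
          - (deriv h ρh + (1 / 2) * deriv κ ρh * ‖qh‖ ^ 2) * (ρ - ρh)
          - κ ρh * ⟪qh, q - qh⟫ := by
  intro ρ hρ ρh hρh q qh
  have hasDeriv₂ : ∀ g : ℝ → ℝ, ContDiff ℝ 2 g →
      ∀ s, HasDerivAt g (deriv g s) s ∧ HasDerivAt (deriv g) (deriv (deriv g) s) s := by
    intro g hg s
    have hg' : ContDiff ℝ 1 (deriv g) := ContDiff.deriv' (n := 1) hg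
    exact ⟨(hg.differentiable (by norm_num) s).hasDerivAt,
      (hg'.differentiable (by norm_num) s).hasDerivAt⟩
  have hH : h ρh - α / 2 * ρh ^ 2 + (deriv h ρh - α * ρh) * (ρ - ρh)
      ≤ h ρ - α / 2 * ρ ^ 2 := by
    refine tangent_le_of_second_deriv_nonneg hI (f := fun s => h s - α / 2 * s ^ 2)
      (f' := fun s => deriv h s - α * s) (f'' := fun s => deriv (deriv h) s - α)
      (fun s _ => ?_) (fun s _ => ?_) (fun s hs => sub_nonneg.2 (hh'' s hs)) hρ hρh
    · refine ((hasDeriv₂ h hh s).1.sub ((hasDerivAt_pow 2 s).const_mul (α / 2))).congr_deriv ?_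
      push_cast
      ring
    · refine ((hasDeriv₂ h hh s).2.sub ((hasDerivAt_id s).const_mul α)).congr_deriv ?_
      ring
  have hK : -(κ ρh)⁻¹ + deriv κ ρh / κ ρh ^ 2 * (ρ - ρh) ≤ -(κ ρ)⁻¹ := by
    refine tangent_le_of_second_deriv_nonneg hI (f := fun s => -(κ s)⁻¹)
      (f' := fun s => deriv κ s / κ s ^ 2)
      (f'' := fun s => (κ s * deriv (deriv κ) s - 2 * deriv κ s ^ 2) / κ s ^ 3)
      (fun s hs => ?_) (fun s hs => ?_)
      (fun s hs => div_nonneg (hκcond s hs) (pow_pos (hκpos s hs) 3).le) hρ hρh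
    · refine ((hasDeriv₂ κ hκ s).1.inv (hκpos s hs).ne').neg.congr_deriv ?_
      ring
    · have h0 := (hκpos s hs).ne'
      refine ((hasDeriv₂ κ hκ s).2.div ((hasDeriv₂ κ hκ s).1.pow 2)
        (pow_ne_zero 2 h0)).congr_deriv ?_
      simp only [Pi.pow_apply]
      field_simp
      push_cast
      ring
  have ha := hκpos ρ hρ
  have hb := hκpos ρh hρh
  have hcoef : 0 ≤ κ ρh - deriv κ ρh * (ρ - ρh) - κ ρh ^ 2 / κ ρ := by
    have h1 := mul_le_mul_of_nonneg_left hK (sq_nonneg (κ ρh))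
    have h2 : κ ρh ^ 2 * (-(κ ρh)⁻¹ + deriv κ ρh / κ ρh ^ 2 * (ρ - ρh))
        = -κ ρh + deriv κ ρh * (ρ - ρh) := by
      field_simp
    have h3 : κ ρh ^ 2 * -(κ ρ)⁻¹ = -(κ ρh ^ 2 / κ ρ) := by ring
    linarith
  have hsq : 1 / (2 * κ ρ) * ‖κ ρ • q - κ ρh • qh‖ ^ 2
      = 1 / 2 * κ ρ * ‖q‖ ^ 2 - κ ρh * ⟪qh, q⟫ + 1 / 2 * (κ ρh ^ 2 / κ ρ) * ‖qh‖ ^ 2 := by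
    rw [norm_sub_sq_real, norm_smul, norm_smul, real_inner_smul_left, real_inner_smul_right,
      real_inner_comm, Real.norm_of_nonneg ha.le, Real.norm_of_nonneg hb.le]
    field_simp
  have hin : ⟪qh, q - qh⟫ = ⟪qh, q⟫ - ‖qh‖ ^ 2 := by
    rw [inner_sub_right, real_inner_self_eq_norm_sq]
  rw [hsq, hin]
  have hfin := mul_nonneg hcoef (sq_nonneg ‖qh‖)
  linarith
end

section
/- (Relative Korteweg stress identity for H) Let κ : ℝ → ℝ be differentiable, ρ, ρ̂ ∈ ℝ with κ(ρ) ≠ 0 and κ(ρ̂) ≠ 0, and q, q̂ ∈ ℝ³. Define H(ρ, q) = κ(ρ) q ⊗ q ∈ ℝ^{3×3}. Then H(ρ, q) − H(ρ̂, q̂) − κ'(ρ̂)(ρ − ρ̂) q̂ ⊗ q̂ − κ(ρ̂)[(q − q̂) ⊗ q̂ + q̂ ⊗ (q − q̂)] = (1/κ(ρ)) (κ(ρ)q − κ(ρ̂)q̂) ⊗ (κ(ρ)q − κ(ρ̂)q̂) + κ(ρ̂)² [ −1/κ(ρ) + 1/κ(ρ̂) − (κ'(ρ̂)/κ(ρ̂)²)(ρ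 − ρ̂) ] q̂ ⊗ q̂. -/
/-- The outer (tensor) product `a ⊗ b` of two vectors of `ℝ³`, the `3×3` matrix with
entries `aᵢ bⱼ`. -/
noncomputable def outerProd (a b : EuclideanSpace ℝ (Fin 3)) :
    Matrix (Fin 3) (Fin 3) ℝ :=
  Matrix.of fun i j => a i * b j

/-- **relative Korteweg stress identity for `H`.**  For a differentiable
capillarity `κ : ℝ → ℝ` with `κ ρ ≠ 0`, `κ ρ̂ ≠ 0`, and `H(ρ,q) = κ(ρ) q ⊗ q`, the
relative quantity `H(ρ,q|ρ̂,q̂)` equals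
`(1/κ(ρ))(κ(ρ)q - κ(ρ̂)q̂) ⊗ (κ(ρ)q - κ(ρ̂)q̂)
  + κ(ρ̂)²(-1/κ(ρ) + 1/κ(ρ̂) - (κ'(ρ̂)/κ(ρ̂)²)(ρ-ρ̂)) q̂ ⊗ q̂`. -/
theorem relative_korteweg_stress_H_identity
    (κ : ℝ → ℝ) (hκdiff : Differentiable ℝ κ)
    (ρ ρh : ℝ) (hρ : κ ρ ≠ 0) (hρh : κ ρh ≠ 0)
    (q qh : EuclideanSpace ℝ (Fin 3)) :
    κ ρ • outerProd q q - κ ρh • outerProd qh qh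
        - (deriv κ ρh * (ρ - ρh)) • outerProd qh qh
        - κ ρh • (outerProd (q - qh) qh + outerProd qh (q - qh))
      = (κ ρ)⁻¹ • outerProd (κ ρ • q - κ ρh • qh) (κ ρ • q - κ ρh • qh)
        + ((κ ρh) ^ 2
            * (-(1 / κ ρ) + 1 / κ ρh - (deriv κ ρh / (κ ρh) ^ 2) * (ρ - ρh)))
          • outerProd qh qh := by
  ext i j
  simp only [outerProd, Matrix.add_apply, Matrix.sub_apply, Matrix.smul_apply, Matrix.of_apply,
    PiLp.sub_apply, PiLp.smul_apply, smul_eq_mul]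
  field_simp
  ring
end

section
/- (Relative estimate for H, inequality (eq:Hest)) Let 0 < a ≤ b and M > 0, and let κ : [a, b] → ℝ be twice continuously differentiable with κ > 0 on [a, b]. Define H(ρ, q) = κ(ρ) q ⊗ q ∈ ℝ^{3×3}. Then there exists C > 0, depending only on a, b, M, and κ, such that for all ρ, ρ̂ ∈ [a, b] and all q, q̂ ∈ ℝ³ with |q̂| ≤ M, the relative quantity H(ρ, q | ρ̂, q̂) := H(ρ, q) − H(ρ̂, q̂) − κ'(ρ̂)(ρ − ρ̂) q̂ ⊗ q̂ − κ(ρ̂)[(q − q̂) ⊗ q̂ + q̂ ⊗ (q − q̂)] satisfies the Frobenius-norm bound ‖H(ρ, q | ρ̂, q̂)‖ ≤ (1/κ(ρ)) |κ(ρ)q − κ(ρ̂)q̂|² + C (ρ − ρ̂)². -/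
/-!
Put `v = κ(ρ) q - κ(ρ̂) q̂`. Completing the square in `q` gives the exact identity
`H(ρ,q|ρ̂,q̂) = κ(ρ)⁻¹ v ⊗ v + t q̂ ⊗ q̂`, where
`t = (κ(ρ) - κ(ρ̂) - κ'(ρ̂)(ρ - ρ̂)) - (κ(ρ) - κ(ρ̂))² / κ(ρ)`.
The Frobenius norm of `s v ⊗ v + t w ⊗ w` is at most `s |v|² + |t| |w|²` for `s ≥ 0`
(`frobNorm_rankOne_add_le`), and `t = O((ρ - ρ̂)²)` uniformly on `[a,b]`: the first term is a
first-order Taylor remainder (`exists_taylor_bound`), the second is controlled by the Lipschitz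
constant of `κ` on `[a,b]` and the positive minimum of `κ` there.
-/

open Finset

/-- The Frobenius norm of a `3×3` real matrix. -/
noncomputable def frobNorm (A : Matrix (Fin 3) (Fin 3) ℝ) : ℝ :=
  Real.sqrt (∑ i, ∑ j, (A i j) ^ 2)

/-- A `C¹` function is Lipschitz on a compact interval. -/
lemma exists_lipschitz_bound (a b : ℝ) (f : ℝ → ℝ) (hf : ContDiff ℝ 1 f) :
    ∃ L : ℝ, 0 ≤ L ∧ ∀ x ∈ Set.Icc a b, ∀ y ∈ Set.Icc a b, |f y - f x| ≤ L * |y - x| := by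
  obtain ⟨L, hL⟩ := isCompact_Icc.exists_bound_of_continuousOn (s := Set.Icc a b)
    (hf.continuous_deriv le_rfl).continuousOn
  refine ⟨max L 0, le_max_right _ _, fun x hx y hy => ?_⟩
  exact Convex.norm_image_sub_le_of_norm_deriv_le (s := Set.Icc a b)
    (fun z _ => (hf.differentiable one_ne_zero) z)
    (fun z hz => (hL z hz).trans (le_max_left _ _)) (convex_Icc a b) hx hy

/-- The first-order Taylor remainder of a `C²` function is quadratic, uniformly on a compact
interval. -/
lemma exists_taylor_bound (a b : ℝ) (f : ℝ → ℝ) (hf : ContDiff ℝ 2 f) :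
    ∃ B : ℝ, 0 ≤ B ∧ ∀ x ∈ Set.Icc a b, ∀ y ∈ Set.Icc a b,
      |f y - f x - deriv f x * (y - x)| ≤ B * (y - x) ^ 2 := by
  have hf' : ContDiff ℝ 1 (deriv f) :=
    ((contDiff_succ_iff_deriv (n := 1)).1 (by simpa [one_add_one_eq_two] using hf)).2.2
  have hd : Differentiable ℝ f := hf.differentiable two_ne_zero
  obtain ⟨B, hB0, hB⟩ := exists_lipschitz_bound a b (deriv f) hf'
  refine ⟨B, hB0, fun x hx y hy => ?_⟩
  -- Mean value inequality for `z ↦ f z - f' x * z`, whose derivative on the segment between `x`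
  -- and `y` is at most `B * |y - x|`.
  have key := Convex.norm_image_sub_le_of_norm_hasDerivWithin_le (s := Set.uIcc x y)
    (f := fun z => f z - deriv f x * z) (f' := fun z => deriv f z - deriv f x * 1)
    (C := B * |y - x|)
    (fun z _ => ((hd z).hasDerivAt.sub ((hasDerivAt_id z).const_mul (deriv f x))).hasDerivWithinAt)
    (fun z hz => by
      rw [mul_one, Real.norm_eq_abs]
      exact (hB x hx z (Set.uIcc_subset_Icc hx hy hz)).trans
        (mul_le_mul_of_nonneg_left (Set.abs_sub_left_of_mem_uIcc hz) hB0))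
    (convex_uIcc x y) Set.left_mem_uIcc Set.right_mem_uIcc
  rw [Real.norm_eq_abs, Real.norm_eq_abs, mul_assoc, ← sq, sq_abs] at key
  convert key using 2
  ring

/-- The triangle inequality for the Frobenius norm of a sum of two symmetric rank-one matrices.
After squaring it reduces to the Cauchy–Schwarz inequality `(v · w)² ≤ |v|² |w|²`. -/
lemma frobNorm_rankOne_add_le (s t : ℝ) (hs : 0 ≤ s) (v w : EuclideanSpace ℝ (Fin 3)) :
    frobNorm (s • outerProd v v + t • outerProd w w) ≤ s * ‖v‖ ^ 2 + |t| * ‖w‖ ^ 2 := by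
  refine Real.sqrt_le_iff.2 ⟨by positivity, ?_⟩
  have hcs : (inner ℝ v w) ^ 2 ≤ ‖v‖ ^ 2 * ‖w‖ ^ 2 := by
    rw [← mul_pow, ← sq_abs]
    exact pow_le_pow_left₀ (abs_nonneg _) (abs_real_inner_le_norm v w) 2
  have hexp : ∑ i, ∑ j, ((s • outerProd v v + t • outerProd w w) i j) ^ 2
      = s ^ 2 * (‖v‖ ^ 2) ^ 2 + 2 * (s * t) * (inner ℝ v w) ^ 2 + t ^ 2 * (‖w‖ ^ 2) ^ 2 := by
    simp only [EuclideanSpace.real_norm_sq_eq, PiLp.inner_apply, outerProd, Fin.sum_univ_three,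
      Matrix.add_apply, Matrix.smul_apply, Matrix.of_apply, smul_eq_mul, RCLike.inner_apply,
      conj_trivial]
    ring
  have hst : s * t * (inner ℝ v w) ^ 2 ≤ s * |t| * (‖v‖ ^ 2 * ‖w‖ ^ 2) :=
    mul_le_mul (mul_le_mul_of_nonneg_left (le_abs_self t) hs) hcs (sq_nonneg _) (by positivity)
  rw [hexp]
  nlinarith [sq_abs t]

/-- **relative estimate for `H`, inequality (eq:Hest).**  Let
`0 < a ≤ b`, `M > 0`, and let `κ` be twice continuously differentiable with `κ > 0` on
`[a,b]`.  With `H(ρ,q) = κ(ρ) q ⊗ q`, there is `C > 0` such that for all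
`ρ, ρ̂ ∈ [a,b]` and `q, q̂ ∈ ℝ³` with `|q̂| ≤ M`, the relative quantity
`H(ρ,q|ρ̂,q̂) = H(ρ,q) - H(ρ̂,q̂) - κ'(ρ̂)(ρ-ρ̂) q̂⊗q̂ - κ(ρ̂)[(q-q̂)⊗q̂ + q̂⊗(q-q̂)]`
satisfies `‖H(ρ,q|ρ̂,q̂)‖_F ≤ (1/κ(ρ))|κ(ρ)q - κ(ρ̂)q̂|² + C(ρ-ρ̂)²`. -/
theorem relative_korteweg_stress_H_estimate
    (a b M : ℝ) (ha : 0 < a) (hab : a ≤ b) (hM : 0 < M)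
    (κ : ℝ → ℝ) (hκC : ContDiff ℝ 2 κ)
    (hκpos : ∀ s ∈ Set.Icc a b, 0 < κ s) :
    ∃ C > (0 : ℝ), ∀ ρ ∈ Set.Icc a b, ∀ ρh ∈ Set.Icc a b,
      ∀ q qh : EuclideanSpace ℝ (Fin 3), ‖qh‖ ≤ M →
        frobNorm (κ ρ • outerProd q q - κ ρh • outerProd qh qh
            - (deriv κ ρh * (ρ - ρh)) • outerProd qh qh
            - κ ρh • (outerProd (q - qh) qh + outerProd qh (q - qh)))
          ≤ (1 / κ ρ) * ‖κ ρ • q - κ ρh • qh‖ ^ 2 + C * (ρ - ρh) ^ 2 := by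
  obtain ⟨L, hL0, hL⟩ := exists_lipschitz_bound a b κ (hκC.of_le one_le_two)
  obtain ⟨B, hB0, hB⟩ := exists_taylor_bound a b κ hκC
  obtain ⟨x₀, hx₀, hmin⟩ := isCompact_Icc.exists_isMinOn (Set.nonempty_Icc.2 hab)
    hκC.continuous.continuousOn
  have hm : 0 < κ x₀ := hκpos x₀ hx₀
  refine ⟨(B + L ^ 2 / κ x₀) * M ^ 2 + 1, by positivity, fun ρ hρ ρh hρh q qh hqh => ?_⟩
  have hκ : 0 < κ ρ := hκpos ρ hρ
  have hle : κ x₀ ≤ κ ρ := hmin hρ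
  set t : ℝ := (κ ρ - κ ρh - deriv κ ρh * (ρ - ρh)) - (κ ρ - κ ρh) ^ 2 / κ ρ with ht
  have hid : κ ρ • outerProd q q - κ ρh • outerProd qh qh
      - (deriv κ ρh * (ρ - ρh)) • outerProd qh qh
      - κ ρh • (outerProd (q - qh) qh + outerProd qh (q - qh))
      = (1 / κ ρ) • outerProd (κ ρ • q - κ ρh • qh) (κ ρ • q - κ ρh • qh)
        + t • outerProd qh qh := by
    ext i j
    simp only [outerProd, Matrix.add_apply, Matrix.sub_apply, Matrix.smul_apply, Matrix.of_apply,
      smul_eq_mul, PiLp.sub_apply, PiLp.smul_apply, ht]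
    field_simp
    ring
  have hsq : (κ ρ - κ ρh) ^ 2 / κ ρ ≤ L ^ 2 / κ x₀ * (ρ - ρh) ^ 2 := by
    have h1 : (κ ρ - κ ρh) ^ 2 ≤ L ^ 2 * (ρ - ρh) ^ 2 := by
      have := pow_le_pow_left₀ (abs_nonneg _) (hL ρh hρh ρ hρ) 2
      rwa [mul_pow, sq_abs, sq_abs] at this
    rw [div_mul_eq_mul_div]
    exact div_le_div₀ (by positivity) h1 hm hle
  have htb : |t| ≤ (B + L ^ 2 / κ x₀) * (ρ - ρh) ^ 2 := by
    have h0 : 0 ≤ (κ ρ - κ ρh) ^ 2 / κ ρ := by positivity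
    have h2 := abs_sub (κ ρ - κ ρh - deriv κ ρh * (ρ - ρh)) ((κ ρ - κ ρh) ^ 2 / κ ρ)
    rw [abs_of_nonneg h0] at h2
    linarith [hB ρh hρh ρ hρ]
  have hfin : |t| * ‖qh‖ ^ 2 ≤ (B + L ^ 2 / κ x₀) * (ρ - ρh) ^ 2 * M ^ 2 :=
    mul_le_mul htb (pow_le_pow_left₀ (norm_nonneg _) hqh 2) (by positivity) (by positivity)
  rw [hid]
  refine (frobNorm_rankOne_add_le _ _ (by positivity) _ _).trans ?_
  linarith [sq_nonneg (ρ - ρh)]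
end
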